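/- Let G be a vulnerability graph with host part H and vulnerability part W, let D be its dual graph, and let C be a vertex cover of D. Then in the induced subgraph of G on H ∪ (W \ C), any two distinct vulnerability vertices of W \ C lie in different connected components; equivalently, there is no path in that induced subgraph joining two distinct vertices of W \ C. -/

import Mathlib

/-- Let `G` be a vulnerability graph with host part `H` and
vulnerability part `W`, let `D` be its dual graph, and let `C` be a vertex
cover of `D`.  Then in the induced subgraph of `G` on `H ∪ (W \ C)`, any two
distinct vulnerability vertices of `W \ C` lie in different connected
components: there is no path (no reachability) in that induced subgraph
joining two distinct vertices of `W \ C`. -/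
theorem vertexCover_dual_disconnects
    {V : Type*} [Fintype V] (G : SimpleGraph V) (H W : Set V)
    (hdisj : Disjoint H W) (hunion : H ∪ W = Set.univ)
    (hbip : ∀ u v, G.Adj u v → (u ∈ H ∧ v ∈ W) ∨ (u ∈ W ∧ v ∈ H))
    (D : SimpleGraph V)
    (hD : ∀ v v', D.Adj v v' ↔
      v ≠ v' ∧ v ∈ W ∧ v' ∈ W ∧ ∃ h ∈ H, G.Adj h v ∧ G.Adj h v')
    (C : Set V) (hC : ∀ u v, D.Adj u v → u ∈ C ∨ v ∈ C) :
    ∀ v v' : ↥(H ∪ (W \ C)), (v : V) ∈ W \ C → (v' : V) ∈ W \ C →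
      v ≠ v' → ¬ (G.induce (H ∪ (W \ C))).Reachable v v' := by
  intro v v' hv hv' hne ⟨p⟩
  have hnot : ∀ x, x ∈ H → x ∈ W → False := fun x h1 h2 =>
    Set.disjoint_left.mp hdisj h1 h2
  have key : ∀ a b : ↥(H ∪ (W \ C)), (G.induce (H ∪ (W \ C))).Walk a b →
      ((a : V) = v ∨ ((a : V) ∈ H ∧ G.Adj a v)) →
      ((b : V) = v ∨ ((b : V) ∈ H ∧ G.Adj b v)) := by
    intro a b q
    induction q with
    | nil => exact id
    | @cons a c b h q ih =>
      intro ha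
      apply ih
      have hac : G.Adj (a : V) (c : V) := h
      rcases ha with ha | ⟨haH, hav⟩
      · right
        rw [ha] at hac
        rcases hbip _ _ hac with ⟨h1, _⟩ | ⟨_, h2⟩
        · exact (hnot _ h1 hv.1).elim
        · exact ⟨h2, hac.symm⟩
      · left
        by_contra hcv
        have hcW : (c : V) ∈ W := by
          rcases hbip _ _ hac with ⟨_, h2⟩ | ⟨h1, _⟩
          · exact h2
          · exact (hnot _ haH h1).elim
        have hcC : (c : V) ∉ C := by
          rcases c.2 with h1 | h1
          · exact (hnot _ h1 hcW).elim
          · exact h1.2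
        rcases hC _ _ ((hD _ _).2 ⟨hcv, hcW, hv.1, a, haH, hac, hav⟩) with h1 | h1
        · exact hcC h1
        · exact hv.2 h1
  rcases key v v' p (Or.inl rfl) with h | ⟨h, _⟩
  · exact hne (Subtype.ext h.symm)
  · exact hnot _ h hv'.1
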